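/- Let A be a unital C*-algebra with a faithful tracial state τ. Suppose x₁, x₂ ∈ A are selfadjoint and α > 0 satisfies ‖[x₁, e]‖₂ + ‖[x₂, e]‖₂ ≥ α ‖e‖₂ ‖1 − e‖₂ for every projection e ∈ A. Then x₁ + i x₂ does not belong to the C*-norm closure of Red(A). -/

import Mathlib

/-- The trace 2-norm `‖x‖₂ = √(Re τ(x*x))` associated with a tracial state `τ`. -/
noncomputable def traceNorm2 {A : Type*} [NormedRing A] [StarRing A] [NormedAlgebra ℂ A]
    (τ : A →ₗ[ℂ] ℂ) (x : A) : ℝ :=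
  Real.sqrt (τ (star x * x)).re

/-- The set of reducible elements of a unital *-ring: those commuting with some
nontrivial projection. -/
def RedSet (A : Type*) [Ring A] [StarRing A] : Set A :=
  {x : A | ∃ p : A, star p = p ∧ p * p = p ∧ p ≠ 0 ∧ p ≠ 1 ∧ x * p = p * x}

/-!
For projections `p`, `q` we have `‖q d p‖₂ ≤ ‖d‖ ‖p‖₂` and, by traciality, `‖q d p‖₂ ≤ ‖d‖ ‖q‖₂`. If
`q = 1 - p`, then `‖p‖₂² + ‖q‖₂² = 1`, so the two bounds combine to
`‖q d p‖₂² ≤ 2 ‖d‖² ‖p‖₂² ‖q‖₂²`. The commutator `[d, p]` is the difference of the two corners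
`q d p` and `p d q`, which are orthogonal, whence `‖[d, p]‖₂ ≤ 2 ‖d‖ ‖p‖₂ ‖1 - p‖₂`.

If `y` commutes with `p`, then `[x₁ + i x₂, p] = [x₁ + i x₂ - y, p]`. Since `[x₁, p]` and `[x₂, p]`
are skew-adjoint, traciality gives `‖[x₁ + i x₂, p]‖₂² = ‖[x₁, p]‖₂² + ‖[x₂, p]‖₂²`. The spectral
gap at `p` therefore forces `α ≤ 2 √2 ‖x₁ + i x₂ - y‖`.
-/

lemma commutator_mem_skewAdjoint {A : Type*} [Ring A] [StarRing A] {x p : A}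
    (hx : IsSelfAdjoint x) (hp : IsSelfAdjoint p) :
    x * p - p * x ∈ skewAdjoint A := by
  simp [skewAdjoint.mem_iff, hx.star_eq, hp.star_eq]

section TraceNorm

open scoped ComplexOrder

variable {A : Type*} [NormedRing A] [StarRing A] [NormedAlgebra ℂ A] {τ : A →ₗ[ℂ] ℂ}

lemma traceNorm2_nonneg (τ : A →ₗ[ℂ] ℂ) (x : A) : 0 ≤ traceNorm2 τ x :=
  Real.sqrt_nonneg _

lemma traceNorm2_sq (hτ : ∀ x, 0 ≤ τ (star x * x)) (x : A) :
    traceNorm2 τ x ^ 2 = (τ (star x * x)).re :=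
  Real.sq_sqrt (Complex.le_def.mp (hτ x)).1

lemma traceNorm2_pos (hτ : ∀ x, 0 ≤ τ (star x * x)) (hτf : ∀ x, τ (star x * x) = 0 → x = 0)
    {x : A} (hx : x ≠ 0) : 0 < traceNorm2 τ x :=
  Real.sqrt_pos.mpr (Complex.pos_iff.mp ((hτ x).lt_of_ne' (mt (hτf x) hx))).1

lemma traceNorm2_one (hτ1 : τ 1 = 1) : traceNorm2 τ 1 = 1 := by
  simp [traceNorm2, hτ1]

lemma traceNorm2_star (hτtr : ∀ x y, τ (x * y) = τ (y * x)) (x : A) :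
    traceNorm2 τ (star x) = traceNorm2 τ x := by
  rw [traceNorm2, traceNorm2, star_star, hτtr]

lemma traceNorm2_neg (τ : A →ₗ[ℂ] ℂ) (x : A) : traceNorm2 τ (-x) = traceNorm2 τ x := by
  rw [traceNorm2, traceNorm2, star_neg, neg_mul_neg]

lemma traceNorm2_add_sq (hτ : ∀ x, 0 ≤ τ (star x * x)) (a b : A) :
    traceNorm2 τ (a + b) ^ 2 =
      traceNorm2 τ a ^ 2 + traceNorm2 τ b ^ 2 + (τ (star a * b) + τ (star b * a)).re := by
  simp only [traceNorm2_sq hτ, star_add, add_mul, mul_add, map_add, Complex.add_re]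
  ring

lemma traceNorm2_add_sq_of_star_mul_eq_zero (hτ : ∀ x, 0 ≤ τ (star x * x)) {a b : A}
    (hab : star a * b = 0) :
    traceNorm2 τ (a + b) ^ 2 = traceNorm2 τ a ^ 2 + traceNorm2 τ b ^ 2 := by
  have hba : star b * a = 0 := by simpa using congrArg star hab
  simp [traceNorm2_add_sq hτ, hab, hba]

lemma traceNorm2_sq_add_one_sub_sq (hτ : ∀ x, 0 ≤ τ (star x * x)) {p : A}
    (hp : IsStarProjection p) :
    traceNorm2 τ p ^ 2 + traceNorm2 τ (1 - p) ^ 2 = traceNorm2 τ 1 ^ 2 := by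
  have horth : star p * (1 - p) = 0 := by rw [hp.isSelfAdjoint.star_eq, hp.mul_one_sub_self]
  rw [← traceNorm2_add_sq_of_star_mul_eq_zero hτ horth, add_sub_cancel]

lemma traceNorm2_add_I_smul_sq [StarModule ℂ A] (hτ : ∀ x, 0 ≤ τ (star x * x))
    (hτtr : ∀ x y, τ (x * y) = τ (y * x)) {a b : A} (ha : a ∈ skewAdjoint A)
    (hb : b ∈ skewAdjoint A) :
    traceNorm2 τ (a + Complex.I • b) ^ 2 = traceNorm2 τ a ^ 2 + traceNorm2 τ b ^ 2 := by
  have hI : traceNorm2 τ (Complex.I • b) = traceNorm2 τ b := by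
    simp [traceNorm2, smul_smul]
  have hcross : τ (star a * Complex.I • b) + τ (star (Complex.I • b) * a) = 0 := by
    simp [skewAdjoint.mem_iff.mp ha, skewAdjoint.mem_iff.mp hb, hτtr b a]
  rw [traceNorm2_add_sq hτ, hI, hcross, Complex.zero_re, add_zero]

lemma traceNorm2_commutator_add_le [StarModule ℂ A] (hτ : ∀ x, 0 ≤ τ (star x * x))
    (hτtr : ∀ x y, τ (x * y) = τ (y * x)) {x₁ x₂ p : A} (hx₁ : IsSelfAdjoint x₁)
    (hx₂ : IsSelfAdjoint x₂) (hp : IsSelfAdjoint p) :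
    traceNorm2 τ (x₁ * p - p * x₁) + traceNorm2 τ (x₂ * p - p * x₂) ≤
      √2 * traceNorm2 τ ((x₁ + Complex.I • x₂) * p - p * (x₁ + Complex.I • x₂)) := by
  have hsplit : (x₁ + Complex.I • x₂) * p - p * (x₁ + Complex.I • x₂) =
      (x₁ * p - p * x₁) + Complex.I • (x₂ * p - p * x₂) := by
    rw [add_mul, mul_add, smul_mul_assoc, mul_smul_comm, smul_sub, add_sub_add_comm]
  refine le_of_sq_le_sq ?_ (mul_nonneg (Real.sqrt_nonneg 2) (traceNorm2_nonneg _ _))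
  rw [mul_pow, Real.sq_sqrt zero_le_two, hsplit, traceNorm2_add_I_smul_sq hτ hτtr
    (commutator_mem_skewAdjoint hx₁ hp) (commutator_mem_skewAdjoint hx₂ hp)]
  exact add_sq_le

variable [CStarRing A] [CompleteSpace A] [StarModule ℂ A]

lemma traceNorm2_mul_le (hτ : ∀ x, 0 ≤ τ (star x * x)) (a b : A) :
    traceNorm2 τ (a * b) ≤ ‖a‖ * traceNorm2 τ b := by
  let : CStarAlgebra A := {}
  let : PartialOrder A := CStarAlgebra.spectralOrder A
  have : StarOrderedRing A := CStarAlgebra.spectralOrderedRing A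
  have hpos : ∀ x, 0 ≤ x → 0 ≤ τ x := fun x hx ↦ by
    obtain ⟨c, rfl⟩ := CStarAlgebra.nonneg_iff_eq_star_mul_self.mp hx
    exact hτ c
  -- `traceNorm2 τ` is the seminorm of the GNS space of `τ`, on which `a` acts with norm `≤ ‖a‖`.
  let f := PositiveLinearMap.mk₀ τ hpos
  exact (f.leftMulMapPreGNS a).le_of_opNorm_le
    (LinearMap.mkContinuous_norm_le _ (norm_nonneg a) _) (f.toPreGNS b)

lemma traceNorm2_mul_le' (hτ : ∀ x, 0 ≤ τ (star x * x)) (hτtr : ∀ x y, τ (x * y) = τ (y * x))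
    (a b : A) : traceNorm2 τ (a * b) ≤ traceNorm2 τ a * ‖b‖ := by
  rw [← traceNorm2_star hτtr, star_mul, mul_comm, ← traceNorm2_star hτtr a, ← norm_star b]
  exact traceNorm2_mul_le hτ _ _

lemma traceNorm2_mul_mul_sq_le (hτ : ∀ x, 0 ≤ τ (star x * x))
    (hτtr : ∀ x y, τ (x * y) = τ (y * x)) {p q : A} (hp : ‖p‖ ≤ 1) (hq : ‖q‖ ≤ 1) (d : A) :
    (traceNorm2 τ p ^ 2 + traceNorm2 τ q ^ 2) * traceNorm2 τ (q * d * p) ^ 2 ≤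
      2 * (‖d‖ * (traceNorm2 τ p * traceNorm2 τ q)) ^ 2 := by
  have hle_p : traceNorm2 τ (q * d * p) ≤ ‖d‖ * traceNorm2 τ p := by
    refine (traceNorm2_mul_le hτ _ _).trans ?_
    gcongr
    · exact traceNorm2_nonneg τ p
    · exact (norm_mul_le q d).trans (mul_le_of_le_one_left (norm_nonneg d) hq)
  have hle_q : traceNorm2 τ (q * d * p) ≤ ‖d‖ * traceNorm2 τ q := by
    rw [mul_assoc, mul_comm ‖d‖]
    refine (traceNorm2_mul_le' hτ hτtr _ _).trans ?_
    gcongr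
    · exact traceNorm2_nonneg τ q
    · exact (norm_mul_le d p).trans (mul_le_of_le_one_right (norm_nonneg d) hp)
  have hcorner := traceNorm2_nonneg τ (q * d * p)
  calc (traceNorm2 τ p ^ 2 + traceNorm2 τ q ^ 2) * traceNorm2 τ (q * d * p) ^ 2
      = traceNorm2 τ p ^ 2 * traceNorm2 τ (q * d * p) ^ 2 +
          traceNorm2 τ q ^ 2 * traceNorm2 τ (q * d * p) ^ 2 := add_mul _ _ _
    _ ≤ traceNorm2 τ p ^ 2 * (‖d‖ * traceNorm2 τ q) ^ 2 +
          traceNorm2 τ q ^ 2 * (‖d‖ * traceNorm2 τ p) ^ 2 := by gcongr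
    _ = 2 * (‖d‖ * (traceNorm2 τ p * traceNorm2 τ q)) ^ 2 := by ring

lemma traceNorm2_commutator_le (hτ : ∀ x, 0 ≤ τ (star x * x)) (hτ1 : τ 1 = 1)
    (hτtr : ∀ x y, τ (x * y) = τ (y * x)) {p : A} (hp : IsStarProjection p) (d : A) :
    traceNorm2 τ (d * p - p * d) ≤ 2 * ‖d‖ * (traceNorm2 τ p * traceNorm2 τ (1 - p)) := by
  have hcorners : d * p - p * d = (1 - p) * d * p + -(p * d * (1 - p)) := by noncomm_ring
  have horth : star ((1 - p) * d * p) * -(p * d * (1 - p)) = 0 := by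
    rw [star_mul, star_mul, hp.one_sub.isSelfAdjoint.star_eq]
    simp [mul_assoc, ← mul_assoc (1 - p) p, hp.one_sub_mul_self]
  have hsum : traceNorm2 τ p ^ 2 + traceNorm2 τ (1 - p) ^ 2 = 1 := by
    rw [traceNorm2_sq_add_one_sub_sq hτ hp, traceNorm2_one hτ1, one_pow]
  have hlower := traceNorm2_mul_mul_sq_le hτ hτtr hp.norm_le hp.one_sub.norm_le d
  have hupper := traceNorm2_mul_mul_sq_le hτ hτtr hp.one_sub.norm_le hp.norm_le d
  rw [hsum, one_mul] at hlower
  rw [add_comm, hsum, one_mul] at hupper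
  have hp_nonneg := traceNorm2_nonneg τ p
  have hq_nonneg := traceNorm2_nonneg τ (1 - p)
  refine le_of_sq_le_sq ?_ (by positivity)
  rw [hcorners, traceNorm2_add_sq_of_star_mul_eq_zero hτ horth, traceNorm2_neg]
  linarith

lemma traceNorm2_commutator_add_le_norm_sub (hτ : ∀ x, 0 ≤ τ (star x * x)) (hτ1 : τ 1 = 1)
    (hτtr : ∀ x y, τ (x * y) = τ (y * x)) {x₁ x₂ y p : A} (hx₁ : IsSelfAdjoint x₁)
    (hx₂ : IsSelfAdjoint x₂) (hp : IsStarProjection p) (hyp : Commute y p) :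
    traceNorm2 τ (x₁ * p - p * x₁) + traceNorm2 τ (x₂ * p - p * x₂) ≤
      2 * √2 * ‖x₁ + Complex.I • x₂ - y‖ * (traceNorm2 τ p * traceNorm2 τ (1 - p)) := by
  set x := x₁ + Complex.I • x₂
  have hxy : x * p - p * x = (x - y) * p - p * (x - y) := by
    rw [sub_mul, mul_sub, hyp.eq, sub_sub_sub_cancel_right]
  calc traceNorm2 τ (x₁ * p - p * x₁) + traceNorm2 τ (x₂ * p - p * x₂)
      ≤ √2 * traceNorm2 τ (x * p - p * x) :=
        traceNorm2_commutator_add_le hτ hτtr hx₁ hx₂ hp.isSelfAdjoint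
    _ ≤ √2 * (2 * ‖x - y‖ * (traceNorm2 τ p * traceNorm2 τ (1 - p))) := by
        rw [hxy]
        gcongr
        exact traceNorm2_commutator_le hτ hτ1 hτtr hp (x - y)
    _ = 2 * √2 * ‖x - y‖ * (traceNorm2 τ p * traceNorm2 τ (1 - p)) := by ring

end TraceNorm

/-- If selfadjoint `x₁, x₂` satisfy the spectral gap inequality
`‖[x₁,e]‖₂ + ‖[x₂,e]‖₂ ≥ α ‖e‖₂ ‖1 − e‖₂` over all projections `e`, then
`x₁ + i x₂` is not in the norm closure of the reducible elements. -/
theorem not_mem_closure_red_of_projection_spectral_gap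
    {A : Type*} [NormedRing A] [StarRing A] [CStarRing A] [CompleteSpace A]
    [NormedAlgebra ℂ A] [StarModule ℂ A]
    (τ : A →ₗ[ℂ] ℂ)
    (hτ1 : τ 1 = 1)
    (hτpos : ∀ x : A, 0 ≤ (τ (star x * x)).re)
    (hτreal : ∀ x : A, (τ (star x * x)).im = 0)
    (hτtr : ∀ x y : A, τ (x * y) = τ (y * x))
    (hτfaithful : ∀ x : A, τ (star x * x) = 0 → x = 0)
    (x₁ x₂ : A) (hx₁ : star x₁ = x₁) (hx₂ : star x₂ = x₂)
    (α : ℝ) (hα : 0 < α)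
    (h : ∀ e : A, star e = e → e * e = e →
      α * (traceNorm2 τ e * traceNorm2 τ (1 - e)) ≤
        traceNorm2 τ (x₁ * e - e * x₁) + traceNorm2 τ (x₂ * e - e * x₂)) :
    (x₁ + Complex.I • x₂) ∉ closure (RedSet A) := by
  have hτ (x : A) := Complex.nonneg_iff.mpr ⟨hτpos x, (hτreal x).symm⟩
  intro hmem
  obtain ⟨y, ⟨p, hp_star, hp_idem, hp0, hp1, hyp⟩, hy⟩ :=
    Metric.mem_closure_iff.mp hmem (α / (2 * √2)) (by positivity)
  rw [dist_eq_norm, lt_div_iff₀' (by positivity)] at hy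
  have hs : 0 < traceNorm2 τ p * traceNorm2 τ (1 - p) :=
    mul_pos (traceNorm2_pos hτ hτfaithful hp0)
      (traceNorm2_pos hτ hτfaithful (sub_ne_zero.mpr hp1.symm))
  have hle := traceNorm2_commutator_add_le_norm_sub hτ hτ1 hτtr hx₁ hx₂ ⟨hp_idem, hp_star⟩ hyp
  exact hy.not_ge (le_of_mul_le_mul_right ((h p hp_star hp_idem).trans hle) hs)
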